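/- arXiv:2108.02828 — 3 statements merged into one kernel-verified Lean document; each statement's English description precedes it below -/
import Mathlib

section
/- For every positive integer h, every c ∈ (1/h)ℤ with c > 0, and all real numbers s₀, d₀, there exists N > 0 such that for all real n₀ ≥ N the following holds. Suppose (δ, s, d) satisfies the closeness bounds (with parameters h, c, s₀, d₀, n₀), set n := n₀ − δ, and suppose c′ ∈ (1/h)ℤ and s′, d′ ∈ ℝ satisfy: (1) c′ < c; (2) n + c′ ≥ n₀ − c/3; (3) (s − s′)/(c − c′) > −n₀/4 − |s₀|·h; (4) (n + c′)² + 2(s′ − n²/2) ≥ 0; (5) d − d′ ≤ (s − s′)²/(2(c − c′)) + (c − c′)³/24; (6) (n³/2)c′ + n²( c′²/2 + 2c′(s−s′)/(c−c′) − s′ ) + n( −2c′s + ((s−s′)/(c−c′))(2c′c + c′² + 2s′) ) + 2s′² + (c′² + 2s′)·(sc′ − cs′)/(c − c′) ≥ 3d′(n + c′). Then either 0 < c′ < c, or c′ = 0 and δ = 0. -/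
/-- `x` lies in the lattice `(1/h)·ℤ`. -/
def inLat (h : ℕ) (x : ℝ) : Prop := ∃ k : ℤ, x = (k : ℝ) / h

/-- The closeness bounds (with parameters `h, c, s₀, d₀, n₀`) on a triple `(δ, s, d)`. -/
def CloseBounds (h : ℕ) (c s₀ d₀ n₀ δ s d : ℝ) : Prop :=
  inLat h δ ∧ 0 ≤ δ ∧ δ ≤ c / 3 ∧
  (-n₀ * δ - |s₀| ≤ s) ∧
  (s ≤ -(3 / 4) * n₀ * δ + (c + |s₀| * h) * δ + s₀) ∧
  ((15 / 32) * n₀ ^ 2 * δ - n₀ * δ * (|s₀| * h + c) - δ * (s₀ * h) ^ 2 + d₀ ≤ d)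

/-!
Divide everything by the appropriate power of `n₀`. In the variables `σ = s / n₀`,
`m = (s - s') / (c - c') / n₀` and `w = d' / n₀ ^ 2`, inequality (6) says that a polynomial in
`ε = 1 / n₀` is nonnegative, while the remaining hypotheses confine `(δ, σ, c', m)` to a compact
region and bound `w` from below, up to errors of size `O(ε)`. If `c' ≤ 0`, the limit `ε → 0` of
the polynomial is at most `-(δ - c') / 2`, so `δ - c'` has to be small for large `n₀`. As `δ` and
`-c'` are nonnegative elements of `(1/h)ℤ`, they must both vanish.
-/

open Filter Topology

lemma inLat.neg {h : ℕ} {x : ℝ} : inLat h x → inLat h (-x) := by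
  rintro ⟨k, rfl⟩
  exact ⟨-k, by push_cast; ring⟩

lemma inLat.nonpos_of_lt {h : ℕ} {x : ℝ} (hh : 0 < h) (hx : inLat h x) (hlt : x < 1 / h) :
    x ≤ 0 := by
  obtain ⟨k, rfl⟩ := hx
  have hh' : (0 : ℝ) < h := by exact_mod_cast hh
  have hk : k < 1 := by exact_mod_cast (div_lt_div_iff_of_pos_right hh').1 hlt
  have hk' : (k : ℝ) ≤ 0 := by exact_mod_cast Int.lt_add_one_iff.1 hk
  exact div_nonpos_of_nonpos_of_nonneg hk' hh'.le

lemma eq_zero_and_eq_zero_of_sub_lt {h : ℕ} {δ c' : ℝ} (hh : 0 < h) (hδ : inLat h δ)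
    (hc' : inLat h c') (hδ0 : 0 ≤ δ) (hc'0 : c' ≤ 0) (hlt : δ - c' < 1 / h) :
    c' = 0 ∧ δ = 0 := by
  have hδ' : δ ≤ 0 := hδ.nonpos_of_lt hh (by linarith)
  have hc'' : -c' ≤ 0 := hc'.neg.nonpos_of_lt hh (by linarith)
  constructor <;> linarith

lemma eventually_forall_mem_lt_add_of_isCompact {X Y : Type*} [TopologicalSpace X]
    [TopologicalSpace Y] {f : X → Y → ℝ} (hf : Continuous fun z : X × Y ↦ f z.1 z.2) (x₀ : X)
    {K : Set Y} (hK : IsCompact K) {κ : ℝ} (hκ : 0 < κ) :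
    ∀ᶠ x in 𝓝 x₀, ∀ y ∈ K, f x y < f x₀ y + κ := by
  refine hK.eventually_forall_of_forall_eventually fun y _ ↦ ?_
  have hf₀ : Continuous fun z : X × Y ↦ f x₀ z.2 + κ :=
    (hf.comp (continuous_const.prodMk continuous_snd)).add_const κ
  exact hf.continuousAt.eventually_lt hf₀.continuousAt (lt_add_of_pos_right _ hκ)

/-- The inequalities (2)–(6) satisfied by a wall for `wₙ`, `n = n₀ - δ`, whose rank-0 factor has
class `(0, c - c', s - s', d - d')`. -/
structure WallInequalities (h : ℕ) (c s₀ n₀ δ s d c' s' d' : ℝ) : Prop where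
  rank_one : n₀ - δ + c' ≥ n₀ - c / 3
  slope : (s - s') / (c - c') > -n₀ / 4 - |s₀| * h
  bogomolov : (n₀ - δ + c') ^ 2 + 2 * (s' - (n₀ - δ) ^ 2 / 2) ≥ 0
  ch₃_rank_zero : d - d' ≤ (s - s') ^ 2 / (2 * (c - c')) + (c - c') ^ 3 / 24
  bmt : ((n₀ - δ) ^ 3 / 2) * c'
      + (n₀ - δ) ^ 2 * (c' ^ 2 / 2 + 2 * c' * (s - s') / (c - c') - s')
      + (n₀ - δ) * (-2 * c' * s + ((s - s') / (c - c')) * (2 * c' * c + c' ^ 2 + 2 * s'))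
      + 2 * s' ^ 2 + (c' ^ 2 + 2 * s') * ((s * c' - c * s') / (c - c'))
      ≥ 3 * d' * (n₀ - δ + c')

/-- Left-hand side minus right-hand side of (6), divided by `n₀ ^ 3`, as a polynomial in
`ε = 1 / n₀`, `σ = s / n₀`, `m = (s - s') / (c - c') / n₀` and `w = d' / n₀ ^ 2`.
The number `s' / n₀` is eliminated as `σ - (c - c') * m`. -/
noncomputable def rescaledExcess (c ε δ σ c' m w : ℝ) : ℝ :=
  (1 - ε * δ) ^ 3 / 2 * c'
    + (1 - ε * δ) ^ 2 * (ε * c' ^ 2 / 2 + 2 * c' * m - (σ - (c - c') * m))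
    + (1 - ε * δ) * (-2 * ε * c' * σ
      + m * (ε * (2 * c' * c + c' ^ 2) + 2 * (σ - (c - c') * m)))
    + 2 * ε * (σ - (c - c') * m) ^ 2
    + ε * (ε * c' ^ 2 + 2 * (σ - (c - c') * m)) * (c * m - σ)
    - 3 * w * (1 - ε * δ + ε * c')

lemma pow_three_mul_rescaledExcess {c n₀ δ s c' s' d' : ℝ} (hn₀ : n₀ ≠ 0) (hc' : c - c' ≠ 0) :
    n₀ ^ 3 * rescaledExcess c n₀⁻¹ δ (s / n₀) c' ((s - s') / (c - c') / n₀) (d' / n₀ ^ 2) =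
      ((n₀ - δ) ^ 3 / 2) * c'
      + (n₀ - δ) ^ 2 * (c' ^ 2 / 2 + 2 * c' * (s - s') / (c - c') - s')
      + (n₀ - δ) * (-2 * c' * s + ((s - s') / (c - c')) * (2 * c' * c + c' ^ 2 + 2 * s'))
      + 2 * s' ^ 2 + (c' ^ 2 + 2 * s') * ((s * c' - c * s') / (c - c'))
      - 3 * d' * (n₀ - δ + c') := by
  unfold rescaledExcess
  field_simp
  ring

lemma rescaledExcess_le_of_le {c ε δ σ c' m w w' : ℝ} (hε : 0 ≤ 1 - ε * δ + ε * c')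
    (hw : w' ≤ w) : rescaledExcess c ε δ σ c' m w ≤ rescaledExcess c ε δ σ c' m w' := by
  unfold rescaledExcess
  gcongr

/-- The hypotheses on `(δ, σ, c', m)`, where `σ = s / n₀` and `m = (s - s') / (c - c') / n₀`, in
the limit `n₀ → ∞` and relaxed by a margin `ρ`, in the case `c' ≤ 0`. -/
structure RescaledBounds (c ρ δ σ c' m : ℝ) : Prop where
  nonneg : 0 ≤ δ
  nonpos : c' ≤ 0
  sub_le : δ - c' ≤ c / 3
  le_σ : -δ - ρ ≤ σ
  σ_le : σ ≤ -(3 / 4) * δ + ρ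
  le_slope : -(1 / 4) - ρ ≤ m
  bogomolov : -c' - ρ ≤ σ - (c - c') * m

/-- The lower bound for `d' / n₀ ^ 2` coming from (5) and the closeness bound on `d`, in the limit
`n₀ → ∞` and relaxed by a margin `ρ`. -/
noncomputable def rescaledCh₃Bound (c ρ δ c' m : ℝ) : ℝ :=
  15 / 32 * δ - (c - c') * m ^ 2 / 2 - ρ

namespace RescaledBounds

variable {c ρ δ σ c' m : ℝ}

lemma sub_mul_le (hb : RescaledBounds c ρ δ σ c' m) :
    (c - c') * m ≤ c' - 3 / 4 * δ + 2 * ρ := by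
  linarith [hb.σ_le, hb.bogomolov]

lemma slope_le_half (hb : RescaledBounds c ρ δ σ c' m) (hc : 0 < c) (hρ : ρ ≤ c / 4) :
    m ≤ 1 / 2 := by
  have hpos : 0 < c - c' := by linarith [hb.nonpos]
  refine le_of_mul_le_mul_left ?_ hpos
  linarith [hb.sub_mul_le, hb.nonneg, hb.nonpos]

lemma rescaledExcess_zero_le (hb : RescaledBounds c ρ δ σ c' m) (hc : 0 < c) (hρ₀ : 0 ≤ ρ)
    (hρ : ρ ≤ 1 / 16) (hρc : ρ ≤ c / 4) :
    rescaledExcess c 0 δ σ c' m (rescaledCh₃Bound c ρ δ c' m) ≤ -(δ - c') / 2 + 7 * ρ := by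
  have hm := hb.slope_le_half hc hρc
  have hδ := hb.nonneg
  have hc' := hb.nonpos
  have hle := hb.le_slope
  have hσ : -σ * (1 - 2 * m) ≤ (δ + ρ) * (13 / 8) :=
    mul_le_mul (by linarith [hb.le_σ]) (by linarith) (by linarith) (by linarith)
  have hslope : c' * m ≤ c' * (-(5 / 16)) := mul_le_mul_of_nonpos_left (by linarith) hc'
  have hsq : 0 ≤ (c - c') * m ^ 2 := mul_nonneg (by linarith) (sq_nonneg m)
  calc rescaledExcess c 0 δ σ c' m (rescaledCh₃Bound c ρ δ c' m)
      = c' / 2 + 2 * (c' * m) + -σ * (1 - 2 * m) + (c - c') * m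
          - (c - c') * m ^ 2 / 2 - 45 / 32 * δ + 3 * ρ := by
        unfold rescaledExcess rescaledCh₃Bound; ring
    _ ≤ -(δ - c') / 2 + 7 * ρ := by linarith [hb.sub_mul_le]

lemma mem_closedBall (hb : RescaledBounds c ρ δ σ c' m) (hc : 0 < c) (hρ : ρ ≤ 1 / 16)
    (hρc : ρ ≤ c / 4) : (δ, σ, c', m) ∈ Metric.closedBall (0 : ℝ × ℝ × ℝ × ℝ) (c + 1) := by
  have hm := hb.slope_le_half hc hρc
  obtain ⟨hδ, hc', hsub, hσ, hσ', hm', -⟩ := hb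
  simp only [mem_closedBall_zero_iff, norm_prod_le_iff, Real.norm_eq_abs, abs_le]
  refine ⟨⟨?_, ?_⟩, ⟨?_, ?_⟩, ⟨?_, ?_⟩, ?_, ?_⟩ <;> linarith

end RescaledBounds

lemma eventually_rescaledExcess_lt {c ρ : ℝ} (hc : 0 < c) (hρ₀ : 0 < ρ) (hρ : ρ ≤ 1 / 16)
    (hρc : ρ ≤ c / 4) :
    ∀ᶠ ε in 𝓝 0, ∀ δ σ c' m, RescaledBounds c ρ δ σ c' m →
      rescaledExcess c ε δ σ c' m (rescaledCh₃Bound c ρ δ c' m) < -(δ - c') / 2 + 8 * ρ := by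
  let f : ℝ → ℝ × ℝ × ℝ × ℝ → ℝ := fun ε p ↦
    rescaledExcess c ε p.1 p.2.1 p.2.2.1 p.2.2.2 (rescaledCh₃Bound c ρ p.1 p.2.2.1 p.2.2.2)
  have hf : Continuous fun z : ℝ × ℝ × ℝ × ℝ × ℝ ↦ f z.1 z.2 := by
    unfold f rescaledExcess rescaledCh₃Bound
    fun_prop
  filter_upwards [eventually_forall_mem_lt_add_of_isCompact hf 0
    (isCompact_closedBall 0 (c + 1)) hρ₀] with ε hε δ σ c' m hb
  have hlimit := hb.rescaledExcess_zero_le hc hρ₀.le hρ hρc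
  have hclose : rescaledExcess c ε δ σ c' m (rescaledCh₃Bound c ρ δ c' m)
      < rescaledExcess c 0 δ σ c' m (rescaledCh₃Bound c ρ δ c' m) + ρ :=
    hε (δ, σ, c', m) (hb.mem_closedBall hc hρ hρc)
  linarith

namespace WallInequalities

variable {h : ℕ} {c s₀ d₀ n₀ δ s d c' s' d' ρ : ℝ}

lemma neg_sub_le_rescaled (hw : WallInequalities h c s₀ n₀ δ s d c' s' d') (hn₀ : 0 < n₀)
    (hc : 0 < c) (hδ : 0 ≤ δ) (hc' : c' ≤ 0) (hlarge : c ^ 2 ≤ ρ * n₀) :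
    -c' - ρ ≤ s / n₀ - (c - c') * ((s - s') / (c - c') / n₀) := by
  have hpos : 0 < c - c' := by linarith
  have hs' : s / n₀ - (c - c') * ((s - s') / (c - c') / n₀) = s' / n₀ := by
    field_simp
    ring
  have hsq : (δ - c') ^ 2 ≤ c ^ 2 :=
    pow_le_pow_left₀ (by linarith) (by linarith [hw.rank_one]) 2
  rw [hs', le_div_iff₀ hn₀]
  linarith [hw.bogomolov, sq_nonneg δ, sq_nonneg c]

lemma rescaledBounds (hw : WallInequalities h c s₀ n₀ δ s d c' s' d')
    (hclose : CloseBounds h c s₀ d₀ n₀ δ s d) (hn₀ : 0 < n₀) (hc : 0 < c) (hc' : c' ≤ 0)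
    (hs₀ : (c + |s₀| * h) * c + |s₀| ≤ ρ * n₀) (hslope : |s₀| * h ≤ ρ * n₀)
    (hbog : c ^ 2 ≤ ρ * n₀) :
    RescaledBounds c ρ δ (s / n₀) c' ((s - s') / (c - c') / n₀) := by
  obtain ⟨-, hδ, hδc, hs, hs', -⟩ := hclose
  have herror : (c + |s₀| * h) * δ ≤ (c + |s₀| * h) * c := by
    gcongr
    linarith
  have herror₀ : 0 ≤ (c + |s₀| * h) * c := by positivity
  refine ⟨hδ, hc', by linarith [hw.rank_one], ?_, ?_, ?_,
    hw.neg_sub_le_rescaled hn₀ hc hδ hc' hbog⟩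
  · rw [le_div_iff₀ hn₀]
    linarith
  · rw [div_le_iff₀ hn₀]
    linarith [le_abs_self s₀]
  · rw [le_div_iff₀ hn₀]
    linarith [hw.slope]

lemma rescaledCh₃Bound_le (hw : WallInequalities h c s₀ n₀ δ s d c' s' d')
    (hclose : CloseBounds h c s₀ d₀ n₀ δ s d) (hn₀ : 1 ≤ n₀) (hc : 0 < c) (hc' : c' ≤ 0)
    (hlarge : c * (|s₀| * h + c) + (c * (s₀ * h) ^ 2 + |d₀| + (2 * c) ^ 3 / 24) ≤ ρ * n₀) :
    rescaledCh₃Bound c ρ δ c' ((s - s') / (c - c') / n₀) ≤ d' / n₀ ^ 2 := by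
  obtain ⟨-, hδ, hδc, -, -, hd⟩ := hclose
  have hpos : 0 < c - c' := by linarith
  have hn₀' : 0 < n₀ := by linarith
  have hsq : (c - c') * ((s - s') / (c - c') / n₀) ^ 2 / 2 * n₀ ^ 2
      = (s - s') ^ 2 / (2 * (c - c')) := by
    field_simp
  have hcube : (c - c') ^ 3 ≤ (2 * c) ^ 3 := by
    gcongr
    linarith [hw.rank_one]
  have hlinear : n₀ * (δ * (|s₀| * h + c)) ≤ n₀ * (c * (|s₀| * h + c)) := by
    gcongr
    linarith
  have hconst : δ * (s₀ * h) ^ 2 ≤ c * (s₀ * h) ^ 2 := by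
    gcongr
    linarith
  have hconst' : c * (s₀ * h) ^ 2 + |d₀| + (2 * c) ^ 3 / 24
      ≤ n₀ * (c * (s₀ * h) ^ 2 + |d₀| + (2 * c) ^ 3 / 24) :=
    le_mul_of_one_le_left (by positivity) hn₀
  have herror := mul_le_mul_of_nonneg_left hlarge hn₀'.le
  rw [le_div_iff₀ (by positivity), rescaledCh₃Bound, sub_mul, sub_mul, hsq]
  linarith [hw.ch₃_rank_zero, neg_abs_le d₀]

lemma rescaledExcess_nonneg (hw : WallInequalities h c s₀ n₀ δ s d c' s' d') (hn₀ : 0 < n₀)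
    (hc' : c - c' ≠ 0) :
    0 ≤ rescaledExcess c n₀⁻¹ δ (s / n₀) c' ((s - s') / (c - c') / n₀) (d' / n₀ ^ 2) := by
  refine nonneg_of_mul_nonneg_right ?_ (pow_pos hn₀ 3)
  rw [pow_three_mul_rescaledExcess hn₀.ne' hc']
  exact sub_nonneg.2 hw.bmt

end WallInequalities

theorem eventually_sub_lt_of_wallInequalities (h : ℕ) {c : ℝ} (hc : 0 < c) (s₀ d₀ : ℝ) {η : ℝ}
    (hη : 0 < η) :
    ∀ᶠ n₀ in atTop, ∀ δ s d c' s' d', CloseBounds h c s₀ d₀ n₀ δ s d →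
      WallInequalities h c s₀ n₀ δ s d c' s' d' → c' ≤ 0 → δ - c' < η := by
  obtain ⟨ρ, hρ₀, hρ⟩ : ∃ ρ : ℝ, 0 < ρ ∧ ρ ≤ min (1 / 16) (min (c / 4) (η / 16)) :=
    ⟨_, by positivity, le_rfl⟩
  obtain ⟨hρ₁, hρc, hρη⟩ : ρ ≤ 1 / 16 ∧ ρ ≤ c / 4 ∧ ρ ≤ η / 16 := by simpa using hρ
  have hlarge (A : ℝ) : ∀ᶠ n₀ in atTop, A ≤ ρ * n₀ :=
    (tendsto_id.const_mul_atTop hρ₀).eventually_ge_atTop A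
  filter_upwards [eventually_ge_atTop 1, eventually_ge_atTop c,
    hlarge ((c + |s₀| * h) * c + |s₀|), hlarge (|s₀| * h), hlarge (c ^ 2),
    hlarge (c * (|s₀| * h + c) + (c * (s₀ * h) ^ 2 + |d₀| + (2 * c) ^ 3 / 24)),
    tendsto_inv_atTop_zero.eventually (eventually_rescaledExcess_lt hc hρ₀ hρ₁ hρc)]
    with n₀ hn₁ hnc hs₀ hslope hbog hch₃ hlt δ s d c' s' d' hclose hw hc'
  have hn₀ : 0 < n₀ := by linarith
  have hfactor : 0 ≤ 1 - n₀⁻¹ * δ + n₀⁻¹ * c' := by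
    have hrw : 1 - n₀⁻¹ * δ + n₀⁻¹ * c' = (n₀ - δ + c') / n₀ := by field_simp
    rw [hrw]
    exact div_nonneg (by linarith [hw.rank_one]) hn₀.le
  have hneg := hlt _ _ _ _ (hw.rescaledBounds hclose hn₀ hc hc' hs₀ hslope hbog)
  have hnonneg := (hw.rescaledExcess_nonneg hn₀ (by linarith : 0 < c - c').ne').trans
    (rescaledExcess_le_of_le hfactor (hw.rescaledCh₃Bound_le hclose hn₁ hc hc' hch₃))
  linarith

theorem stmt0_general (h : ℕ) (hh : 0 < h) (c : ℝ) (hc0 : 0 < c)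
    (s₀ d₀ : ℝ) :
    ∃ N : ℝ, 0 < N ∧ ∀ n₀ : ℝ, N ≤ n₀ →
      ∀ δ s d : ℝ, CloseBounds h c s₀ d₀ n₀ δ s d →
      ∀ n : ℝ, n = n₀ - δ →
      ∀ c' s' d' : ℝ, inLat h c' →
        c' < c →
        n + c' ≥ n₀ - c / 3 →
        (s - s') / (c - c') > -n₀ / 4 - |s₀| * h →
        (n + c') ^ 2 + 2 * (s' - n ^ 2 / 2) ≥ 0 →
        d - d' ≤ (s - s') ^ 2 / (2 * (c - c')) + (c - c') ^ 3 / 24 →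
        (n ^ 3 / 2) * c' + n ^ 2 * (c' ^ 2 / 2 + 2 * c' * (s - s') / (c - c') - s')
          + n * (-2 * c' * s + ((s - s') / (c - c')) * (2 * c' * c + c' ^ 2 + 2 * s'))
          + 2 * s' ^ 2 + (c' ^ 2 + 2 * s') * ((s * c' - c * s') / (c - c'))
          ≥ 3 * d' * (n + c') →
        (0 < c' ∧ c' < c) ∨ (c' = 0 ∧ δ = 0) := by
  have hgap : 0 < 1 / (h : ℝ) := by positivity
  obtain ⟨N, hN⟩ := eventually_atTop.1 (eventually_sub_lt_of_wallInequalities h hc0 s₀ d₀ hgap)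
  refine ⟨max N 1, by positivity, ?_⟩
  rintro n₀ hn₀ δ s d hclose _ rfl c' s' d' hc' hlt hrank hslope hbog hch₃ hbmt
  rcases lt_or_ge 0 c' with hpos | hnonpos
  · exact Or.inl ⟨hpos, hlt⟩
  · refine Or.inr (eq_zero_and_eq_zero_of_sub_lt hh hclose.1 hc' hclose.2.1 hnonpos ?_)
    exact hN n₀ (le_of_max_le_left hn₀) δ s d c' s' d' hclose
      ⟨hrank, hslope, hbog, hch₃, hbmt⟩ hnonpos

theorem stmt0 (h : ℕ) (hh : 0 < h) (c : ℝ) (hc : inLat h c) (hc0 : 0 < c)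
    (s₀ d₀ : ℝ) :
    ∃ N : ℝ, 0 < N ∧ ∀ n₀ : ℝ, N ≤ n₀ →
      ∀ δ s d : ℝ, CloseBounds h c s₀ d₀ n₀ δ s d →
      ∀ n : ℝ, n = n₀ - δ →
      ∀ c' s' d' : ℝ, inLat h c' →
        c' < c →
        n + c' ≥ n₀ - c / 3 →
        (s - s') / (c - c') > -n₀ / 4 - |s₀| * h →
        (n + c') ^ 2 + 2 * (s' - n ^ 2 / 2) ≥ 0 →
        d - d' ≤ (s - s') ^ 2 / (2 * (c - c')) + (c - c') ^ 3 / 24 →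
        (n ^ 3 / 2) * c' + n ^ 2 * (c' ^ 2 / 2 + 2 * c' * (s - s') / (c - c') - s')
          + n * (-2 * c' * s + ((s - s') / (c - c')) * (2 * c' * c + c' ^ 2 + 2 * s'))
          + 2 * s' ^ 2 + (c' ^ 2 + 2 * s') * ((s * c' - c * s') / (c - c'))
          ≥ 3 * d' * (n + c') →
        (0 < c' ∧ c' < c) ∨ (c' = 0 ∧ δ = 0) :=
  stmt0_general h hh c hc0 s₀ d₀
end

section
/- For every positive integer h, every c ∈ (1/h)ℤ with c > 0, and all real numbers s₀, d₀, there exists N > 0 such that for all real n₀ ≥ N the following holds. Suppose (δ, s, d) satisfies the closeness bounds (with parameters h, c, s₀, d₀, n₀), set n := n₀ − δ, and suppose c′ ∈ (1/h)ℤ with δ + (2/3)c ≤ c′ < c, and s′, d′ ∈ ℝ satisfy: −n₀/4 − |s₀|·h < (s − s′)/(c − c′) ≤ s/c, and d − d′ ≤ (s − s′)²/(2(c − c′)) + (c − c′)³/24. Define δ′ := δ + c − c′, s̃ := s′ − (c − c′)n + (1/2)(c − c′)², and d̃ := d′ + (1/2)n²(c − c′) − (1/2)n(c − c′)² + (1/6)(c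 − c′)³. Then δ′ ∈ (1/h)ℤ with 0 < δ′ ≤ c/3, and the triple (δ′, s̃, d̃) again satisfies the closeness bounds (with the same parameters h, c, s₀, d₀, n₀). -/
/-!
Write `e = c - c'`, `A = |s₀| h` and let `t = (s - s') / e` be the slope of the rank-zero factor.
Closeness of `(δ, s, d)` gives `s / c ≤ A` once `n₀ ≥ 4 / 3 * (c + A)`, so `|t| ≤ n₀ / 4 + A`, and
each bound for the new triple is the old bound plus an increment linear in `e`.
To leading order in `n₀` the slope bound `-n₀ / 4 < t` produces the coefficient `3 / 4 = 1 - 1 / 4`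
of the bound on `s`, and `t ^ 2 ≤ (n₀ / 4 + A) ^ 2` produces the coefficient
`15 / 32 = 1 / 2 - (1 / 4) ^ 2 / 2` of the bound on `d`; the lower-order terms are absorbed because
`δ + e ≤ c / 3`.
-/

namespace inLat

variable {h : ℕ} {x y : ℝ}

lemma add (hx : inLat h x) (hy : inLat h y) : inLat h (x + y) := by
  obtain ⟨k, rfl⟩ := hx
  obtain ⟨l, rfl⟩ := hy
  exact ⟨k + l, by push_cast; ring⟩

lemma sub (hx : inLat h x) (hy : inLat h y) : inLat h (x - y) := by
  obtain ⟨k, rfl⟩ := hx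
  obtain ⟨l, rfl⟩ := hy
  exact ⟨k - l, by push_cast; ring⟩

lemma one_le_mul_of_pos (hx : inLat h x) (hx0 : 0 < x) : 1 ≤ x * h := by
  obtain ⟨k, rfl⟩ := hx
  have hh : (h : ℝ) ≠ 0 := fun hzero ↦ by simp [hzero] at hx0
  have hk : 0 < k := by
    rw [← Int.cast_pos (R := ℝ), ← div_mul_cancel₀ (k : ℝ) hh]
    positivity
  rw [div_mul_cancel₀ _ hh]
  exact_mod_cast hk

end inLat

section Wall

variable {c e s s' d d' : ℝ}

-- The slope ordering says `s' ≥ (1 - e / c) * s`, a convex combination of `s` and `0`.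
lemma le_of_slope_le {b : ℝ} (he : 0 < e) (hec : e ≤ c) (hb : b ≤ 0) (hbs : b ≤ s)
    (hslope : (s - s') / e ≤ s / c) : b ≤ s' := by
  have hc : 0 < c := he.trans_le hec
  have hratio : 0 ≤ 1 - e / c := sub_nonneg.2 ((div_le_one hc).2 hec)
  have hdiff : s - s' ≤ s / c * e := (div_le_iff₀ he).1 hslope
  calc
    b ≤ (1 - e / c) * b := by nlinarith [div_pos he hc]
    _ ≤ (1 - e / c) * s := mul_le_mul_of_nonneg_left hbs hratio
    _ = s - s / c * e := by ring
    _ ≤ s' := by linarith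

lemma le_add_mul_of_neg_le_slope {B : ℝ} (he : 0 < e) (hslope : -B ≤ (s - s') / e) :
    s' ≤ s + B * e := by
  linarith [(le_div_iff₀ he).1 hslope]

lemma sub_le_of_abs_slope_le {B : ℝ} (he : 0 < e) (hslope : |(s - s') / e| ≤ B)
    (hd : d - d' ≤ (s - s') ^ 2 / (2 * e) + e ^ 3 / 24) :
    d - B ^ 2 * e / 2 - e ^ 3 / 24 ≤ d' := by
  have hsq : (s - s') ^ 2 / (2 * e) ≤ B ^ 2 * e / 2 := calc
    (s - s') ^ 2 / (2 * e) = ((s - s') / e) ^ 2 * e / 2 := by field_simp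
    _ ≤ B ^ 2 * e / 2 := by
      gcongr ?_ * e / 2
      exact sq_le_sq.2 (hslope.trans (le_abs_self B))
  linarith

end Wall

/-- The component `s̃` of `ch_H(E₁) = (0, c, s̃, d̃) - (1, -n', n'²/2, -n'³/6)`, where `n' = n - e`
and the degree-two part of `ch_H(E₁)` is `-n²/2 + s`. -/
noncomputable def rebaseCh₂ (n e s : ℝ) : ℝ := s + ((n - e) ^ 2 - n ^ 2) / 2

/-- The component `d̃` of `ch_H(E₁) = (0, c, s̃, d̃) - (1, -n', n'²/2, -n'³/6)`, where `n' = n - e`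
and the degree-three part of `ch_H(E₁)` is `n³/6 + d`. -/
noncomputable def rebaseCh₃ (n e d : ℝ) : ℝ := d + (n ^ 3 - (n - e) ^ 3) / 6

section Rebase

variable {c A n₀ δ e s' d d' : ℝ}

lemma sub_mul_le_rebaseCh₂ (hδ : 0 ≤ δ) (he : 0 ≤ e) :
    s' - n₀ * e ≤ rebaseCh₂ (n₀ - δ) e s' := by
  have hδe : 0 ≤ δ * e := mul_nonneg hδ he
  rw [rebaseCh₂]
  linarith [sq_nonneg e]

lemma rebaseCh₂_le {s : ℝ} (he : 0 ≤ e) (hδe : δ + e / 2 ≤ c)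
    (hs' : s' ≤ s + (n₀ / 4 + A) * e) :
    rebaseCh₂ (n₀ - δ) e s' ≤ s - 3 / 4 * n₀ * e + (c + A) * e := by
  have hquad : (δ + e / 2) * e ≤ c * e := mul_le_mul_of_nonneg_right hδe he
  rw [rebaseCh₂]
  linarith

lemma le_rebaseCh₃ (hA : 0 ≤ A) (hn₀ : 0 ≤ n₀) (hδ : 0 ≤ δ) (he : 0 ≤ e) (hδe : δ + e / 2 ≤ c)
    (hd' : d - (n₀ / 4 + A) ^ 2 * e / 2 - e ^ 3 / 24 ≤ d') :
    d + 15 / 32 * n₀ ^ 2 * e - n₀ * e * (A + c) - e * A ^ 2 ≤ rebaseCh₃ (n₀ - δ) e d' := by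
  have hquad : n₀ * e * (δ + e / 2) ≤ n₀ * e * c := mul_le_mul_of_nonneg_left hδe (by positivity)
  have hrest : 0 ≤ 3 / 4 * (n₀ * A * e) + A ^ 2 * e / 2 + δ ^ 2 * e / 2 + δ * e ^ 2 / 2
      + e ^ 3 / 8 := by positivity
  rw [rebaseCh₃]
  linarith

end Rebase

namespace CloseBounds

variable {h : ℕ} {c s₀ d₀ n₀ δ s d : ℝ}

lemma slope_le (hclose : CloseBounds h c s₀ d₀ n₀ δ s d) (hc : inLat h c) (hc0 : 0 < c)
    (hn₀ : 4 / 3 * (c + |s₀| * h) ≤ n₀) : s / c ≤ |s₀| * h := by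
  obtain ⟨-, hδ, -, -, hs, -⟩ := hclose
  have hδ_coeff : 0 ≤ (3 / 4 * n₀ - (c + |s₀| * h)) * δ := mul_nonneg (by linarith) hδ
  have hs₀ : |s₀| ≤ |s₀| * (c * h) :=
    le_mul_of_one_le_right (abs_nonneg s₀) (hc.one_le_mul_of_pos hc0)
  rw [div_le_iff₀ hc0]
  linarith [le_abs_self s₀]

theorem rebase {e s' d' : ℝ} (hclose : CloseBounds h c s₀ d₀ n₀ δ s d) (hc : inLat h c)
    (hn₀ : 4 / 3 * (c + |s₀| * h) ≤ n₀) (he : inLat h e) (he0 : 0 < e) (hδe : δ + e ≤ c / 3)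
    (hslope_lower : -(n₀ / 4 + |s₀| * h) ≤ (s - s') / e) (hslope_upper : (s - s') / e ≤ s / c)
    (hd' : d - d' ≤ (s - s') ^ 2 / (2 * e) + e ^ 3 / 24) :
    CloseBounds h c s₀ d₀ n₀ (δ + e) (rebaseCh₂ (n₀ - δ) e s') (rebaseCh₃ (n₀ - δ) e d') := by
  have ⟨hδ_lat, hδ, _, hs_lower, hs_upper, hd⟩ := hclose
  have hc0 : 0 < c := by linarith
  have hA : 0 ≤ |s₀| * h := by positivity
  have hn₀_pos : 0 < n₀ := by linarith
  have hslope_abs : |(s - s') / e| ≤ n₀ / 4 + |s₀| * h :=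
    abs_le.2 ⟨hslope_lower, by linarith [hclose.slope_le hc hc0 hn₀]⟩
  have hs'_lower : -n₀ * δ - |s₀| ≤ s' :=
    le_of_slope_le he0 (by linarith) (by linarith [mul_nonneg hn₀_pos.le hδ, abs_nonneg s₀])
      hs_lower hslope_upper
  have hs'_upper := le_add_mul_of_neg_le_slope he0 hslope_lower
  have hd'_lower := sub_le_of_abs_slope_le he0 hslope_abs hd'
  have hδe_half : δ + e / 2 ≤ c := by linarith
  refine ⟨hδ_lat.add he, by positivity, hδe, ?_, ?_, ?_⟩
  · linarith [sub_mul_le_rebaseCh₂ (n₀ := n₀) (s' := s') hδ he0.le]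
  · linarith [rebaseCh₂_le he0.le hδe_half hs'_upper]
  · have hsq : (s₀ * h) ^ 2 = (|s₀| * h) ^ 2 := by rw [mul_pow, mul_pow, sq_abs]
    rw [hsq] at hd ⊢
    linarith [le_rebaseCh₃ hA hn₀_pos.le hδ he0.le hδe_half hd'_lower]

end CloseBounds

theorem stmt2 (h : ℕ) (hh : 0 < h) (c : ℝ) (hc : inLat h c) (hc0 : 0 < c)
    (s₀ d₀ : ℝ) :
    ∃ N : ℝ, 0 < N ∧ ∀ n₀ : ℝ, N ≤ n₀ →
      ∀ δ s d : ℝ, CloseBounds h c s₀ d₀ n₀ δ s d →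
      ∀ n : ℝ, n = n₀ - δ →
      ∀ c' s' d' : ℝ, inLat h c' →
        δ + (2 / 3) * c ≤ c' → c' < c →
        -n₀ / 4 - |s₀| * h < (s - s') / (c - c') →
        (s - s') / (c - c') ≤ s / c →
        d - d' ≤ (s - s') ^ 2 / (2 * (c - c')) + (c - c') ^ 3 / 24 →
        ∀ δ' sTilde dTilde : ℝ,
          δ' = δ + c - c' →
          sTilde = s' - (c - c') * n + (1 / 2) * (c - c') ^ 2 →
          dTilde = d' + (1 / 2) * n ^ 2 * (c - c') - (1 / 2) * n * (c - c') ^ 2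
                + (1 / 6) * (c - c') ^ 3 →
          inLat h δ' ∧ 0 < δ' ∧ δ' ≤ c / 3 ∧
            CloseBounds h c s₀ d₀ n₀ δ' sTilde dTilde := by
  refine ⟨4 / 3 * (c + |s₀| * h), by positivity, ?_⟩
  rintro n₀ hn₀ δ s d hclose _ rfl c' s' d' hc' hδc' hc'c hslope_lower hslope_upper hd'
    _ _ _ rfl rfl rfl
  have he : 0 < c - c' := sub_pos.2 hc'c
  have hrebase := hclose.rebase hc hn₀ (hc.sub hc') he (by linarith)
    (by linarith) hslope_upper hd'
  have hδ' : δ + (c - c') = δ + c - c' := by ring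
  have hs : rebaseCh₂ (n₀ - δ) (c - c') s'
      = s' - (c - c') * (n₀ - δ) + 1 / 2 * (c - c') ^ 2 := by
    rw [rebaseCh₂]; ring
  have hd : rebaseCh₃ (n₀ - δ) (c - c') d'
      = d' + 1 / 2 * (n₀ - δ) ^ 2 * (c - c') - 1 / 2 * (n₀ - δ) * (c - c') ^ 2
        + 1 / 6 * (c - c') ^ 3 := by
    rw [rebaseCh₃]; ring
  rw [hδ', hs, hd] at hrebase
  exact ⟨hrebase.1, by linarith [hclose.2.1], hrebase.2.2.1, hrebase⟩
end

section
/- Let c > 0 and s₀, d₀ be real numbers. There exist N > 0 and K > 0 such that for all real n₀ ≥ N the quadratic equation in b given by 2b² = A·b + B, where A := −n₀ + (n₀(6s₀ + c²) + 4(cs₀ + 3d₀))/(2cn₀ + c² + 2s₀) and B := n₀² + (n₀²(6s₀ − c²) + 4(3d₀n₀ + 3d₀c − 2s₀²))/(2cn₀ + c² + 2s₀), has exactly two real solutions b₁ < b₂, and these satisfy |b₁ − (−n₀ + c/3)| ≤ K/n₀ and |b₂ − (n₀/2 − c/12 + 3s₀/(2c))| ≤ K/n₀. -/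
/-!
Write `p = -n₀ + c / 3` and `q = n₀ / 2 - c / 12 + 3 s₀ / (2c)`. Dividing out the denominator
`2 c n₀ + c² + 2 s₀`, the equation becomes `b² = σ b - π` with `σ = p + q + O(1 / n₀)` and
`π = p q + O(1)`. Since `p + q` and the gap `q - p` both have order `n₀`, the discriminant is
`σ² - 4 π = (q - p)² + O(1)`, so its square root is `q - p + O(1 / n₀)`, and the quadratic formula
gives the roots `p + O(1 / n₀)` and `q + O(1 / n₀)`.
-/

open Asymptotics Filter

/-- The smaller root of `b² = σ b - π`, the real quadratic with root sum `σ` and root product `π`;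
meaningful only when `4 π ≤ σ²`, since `√` vanishes on negative numbers. -/
noncomputable def smallerRoot (σ π : ℝ) : ℝ := (σ - √(σ ^ 2 - 4 * π)) / 2

/-- The larger root of `b² = σ b - π`, with the same conventions as `smallerRoot`. -/
noncomputable def largerRoot (σ π : ℝ) : ℝ := (σ + √(σ ^ 2 - 4 * π)) / 2

theorem smallerRoot_lt_largerRoot {σ π : ℝ} (h : 0 < σ ^ 2 - 4 * π) :
    smallerRoot σ π < largerRoot σ π := by
  have := Real.sqrt_pos.mpr h
  unfold smallerRoot largerRoot
  linarith

theorem sq_eq_mul_sub_iff_eq_root {σ π : ℝ} (h : 0 ≤ σ ^ 2 - 4 * π) (b : ℝ) :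
    b ^ 2 = σ * b - π ↔ b = smallerRoot σ π ∨ b = largerRoot σ π := by
  have factored : b ^ 2 - (σ * b - π) = (b - smallerRoot σ π) * (b - largerRoot σ π) := by
    unfold smallerRoot largerRoot
    linear_combination (1 / 4) * Real.sq_sqrt h
  rw [← sub_eq_zero, factored, mul_eq_zero, sub_eq_zero, sub_eq_zero]

theorem two_mul_sq_eq_iff_eq_root {A B : ℝ} (h : 0 ≤ (A / 2) ^ 2 - 4 * (-B / 2)) (b : ℝ) :
    2 * b ^ 2 = A * b + B ↔
      b = smallerRoot (A / 2) (-B / 2) ∨ b = largerRoot (A / 2) (-B / 2) := by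
  rw [← sq_eq_mul_sub_iff_eq_root h]
  constructor <;> intro hb <;> linarith

theorem abs_sqrt_sub_le_abs_sub_sq_div {x g : ℝ} (hx : 0 ≤ x) (hg : 0 < g) :
    |√x - g| ≤ |x - g ^ 2| / g := by
  rw [le_div_iff₀ hg]
  calc |√x - g| * g ≤ |√x - g| * (√x + g) := by gcongr; linarith [Real.sqrt_nonneg x]
    _ = |(√x - g) * (√x + g)| := by rw [abs_mul, abs_of_pos (a := √x + g) (by positivity)]
    _ = |x - g ^ 2| := by congr 1; linear_combination Real.sq_sqrt hx

section RootPerturbation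

variable {α : Type*} {l : Filter α} {σ π p q ε : α → ℝ}

/-- `p` and `q` are approximately, to accuracy `ε` along `l`, the roots of the quadratic
`b² = σ b - π`: they satisfy Vieta's formulas up to an error `O(ε)` in the sum and `O(ε (q - p))`
in the product, and their gap `q - p` is positive, dominates `ε` and controls `p + q`. -/
structure ApproxRoots (l : Filter α) (σ π p q ε : α → ℝ) : Prop where
  eventually_lt : ∀ᶠ a in l, p a < q a
  add_isBigO : (fun a => p a + q a) =O[l] fun a => q a - p a
  error_isLittleO : ε =o[l] fun a => q a - p a
  sum_isBigO : (fun a => σ a - (p a + q a)) =O[l] ε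
  prod_isBigO : (fun a => π a - p a * q a) =O[l] fun a => ε a * (q a - p a)

namespace ApproxRoots

theorem discrim_sub_gap_sq_isBigO (h : ApproxRoots l σ π p q ε) :
    (fun a => (σ a ^ 2 - 4 * π a) - (q a - p a) ^ 2) =O[l] fun a => ε a * (q a - p a) := by
  have sum_add_isBigO :
      (fun a => (σ a - (p a + q a)) + 2 * (p a + q a)) =O[l] fun a => q a - p a :=
    (h.sum_isBigO.trans h.error_isLittleO.isBigO).add (h.add_isBigO.const_mul_left 2)
  refine ((h.sum_isBigO.mul sum_add_isBigO).sub (h.prod_isBigO.const_mul_left 4)).congr_left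
    fun a => ?_
  ring

theorem eventually_discrim_pos (h : ApproxRoots l σ π p q ε) :
    ∀ᶠ a in l, 0 < σ a ^ 2 - 4 * π a := by
  have discrim_isLittleO :
      (fun a => (σ a ^ 2 - 4 * π a) - (q a - p a) ^ 2) =o[l]
        fun a => (q a - p a) * (q a - p a) :=
    h.discrim_sub_gap_sq_isBigO.trans_isLittleO
      (h.error_isLittleO.mul_isBigO (isBigO_refl _ l))
  filter_upwards [discrim_isLittleO.bound one_half_pos, h.eventually_lt] with a ha hlt
  have gap_sq_pos : 0 < (q a - p a) * (q a - p a) := mul_self_pos.mpr (sub_pos.mpr hlt).ne'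
  rw [Real.norm_eq_abs, Real.norm_of_nonneg gap_sq_pos.le] at ha
  linarith [neg_le_of_abs_le ha]

theorem sqrt_discrim_sub_gap_isBigO (h : ApproxRoots l σ π p q ε) :
    (fun a => √(σ a ^ 2 - 4 * π a) - (q a - p a)) =O[l] ε := by
  obtain ⟨C, hC⟩ := h.discrim_sub_gap_sq_isBigO.bound
  refine IsBigO.of_bound C ?_
  filter_upwards [hC, h.eventually_lt, h.eventually_discrim_pos] with a ha hlt hpos
  have gap_pos : 0 < q a - p a := sub_pos.mpr hlt
  refine (abs_sqrt_sub_le_abs_sub_sq_div hpos.le gap_pos).trans ?_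
  rw [norm_mul, Real.norm_of_nonneg gap_pos.le, ← mul_assoc] at ha
  exact (div_le_iff₀ gap_pos).mpr ha

theorem smallerRoot_sub_isBigO (h : ApproxRoots l σ π p q ε) :
    (fun a => smallerRoot (σ a) (π a) - p a) =O[l] ε := by
  refine ((h.sum_isBigO.sub h.sqrt_discrim_sub_gap_isBigO).const_mul_left (1 / 2)).congr_left
    fun a => ?_
  unfold smallerRoot
  ring

theorem largerRoot_sub_isBigO (h : ApproxRoots l σ π p q ε) :
    (fun a => largerRoot (σ a) (π a) - q a) =O[l] ε := by
  refine ((h.sum_isBigO.add h.sqrt_discrim_sub_gap_isBigO).const_mul_left (1 / 2)).congr_left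
    fun a => ?_
  unfold largerRoot
  ring

end ApproxRoots

end RootPerturbation

section AffineQuotients

variable {a : ℝ}

theorem affine_isBigO_id_atTop (a b : ℝ) : (fun n : ℝ => a * n + b) =O[atTop] fun n : ℝ => n :=
  ((isBigO_refl _ _).const_mul_left a).add (isLittleO_const_id_atTop b).isBigO

theorem id_isBigO_affine_atTop (ha : a ≠ 0) (b : ℝ) :
    (fun n : ℝ => n) =O[atTop] fun n : ℝ => a * n + b := by
  have const_isLittleO : (fun _ : ℝ => b) =o[atTop] fun n : ℝ => a * n :=
    (isLittleO_const_id_atTop b).const_mul_right ha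
  exact ((isBigO_refl _ _).const_mul_right ha).trans const_isLittleO.right_isBigO_add'

theorem eventually_affine_ne_zero (ha : a ≠ 0) (b : ℝ) : ∀ᶠ n : ℝ in atTop, a * n + b ≠ 0 := by
  filter_upwards [(id_isBigO_affine_atTop ha b).eq_zero_imp, eventually_ne_atTop 0] with n h hn
  exact mt h hn

theorem inv_affine_isBigO_inv (ha : a ≠ 0) (b : ℝ) :
    (fun n : ℝ => (a * n + b)⁻¹) =O[atTop] fun n : ℝ => n⁻¹ := by
  refine (id_isBigO_affine_atTop ha b).inv_rev ?_
  filter_upwards [eventually_ne_atTop 0] with n hn h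
  exact absurd h hn

theorem affine_div_affine_sub_isBigO_inv (ha : a ≠ 0) (b u v : ℝ) :
    (fun n : ℝ => (u * n + v) / (a * n + b) - u / a) =O[atTop] fun n : ℝ => n⁻¹ := by
  refine ((inv_affine_isBigO_inv ha b).const_mul_left (v - u / a * b)).congr' ?_ .rfl
  filter_upwards [eventually_affine_ne_zero ha b] with n hn
  field_simp
  ring

theorem quadratic_div_affine_sub_isBigO_one (ha : a ≠ 0) (b u v w : ℝ) :
    (fun n : ℝ => (u * n ^ 2 + v * n + w) / (a * n + b) - u / a * n) =O[atTop]
      fun _ : ℝ => (1 : ℝ) := by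
  have remainder_isBigO :
      (fun n : ℝ => ((v - u / a * b) * n + w) * (a * n + b)⁻¹) =O[atTop] fun n : ℝ => n * n⁻¹ :=
    (affine_isBigO_id_atTop _ _).mul (inv_affine_isBigO_inv ha b)
  refine remainder_isBigO.congr' ?_ ?_
  · filter_upwards [eventually_affine_ne_zero ha b] with n hn
    field_simp
    ring
  · filter_upwards [eventually_ne_atTop 0] with n hn
    exact mul_inv_cancel₀ hn

end AffineQuotients

section BogomolovGiesekerLine

/-- The coefficient `A` of the quadratic `2 b² = A b + B` cut out on the parabola `w = b² / 2` by
the Bogomolov–Gieseker line of the rank `-1` class with parameters `c`, `s`, `d`, `n`. -/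
noncomputable def lineLinearCoeff (c s d n : ℝ) : ℝ :=
  -n + (n * (6 * s + c ^ 2) + 4 * (c * s + 3 * d)) / (2 * c * n + c ^ 2 + 2 * s)

/-- The coefficient `B` of the quadratic `2 b² = A b + B` described at `lineLinearCoeff`. -/
noncomputable def lineConstCoeff (c s d n : ℝ) : ℝ :=
  n ^ 2 + (n ^ 2 * (6 * s - c ^ 2) + 4 * (3 * d * n + 3 * d * c - 2 * s ^ 2))
    / (2 * c * n + c ^ 2 + 2 * s)

variable {c : ℝ}

theorem lineLinearCoeff_half_sub_isBigO (hc : c ≠ 0) (s d : ℝ) :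
    (fun n => lineLinearCoeff c s d n / 2
        - ((-n + c / 3) + (n / 2 - c / 12 + 3 * s / (2 * c)))) =O[atTop] fun n : ℝ => n⁻¹ := by
  have quotient_isBigO := affine_div_affine_sub_isBigO_inv (mul_ne_zero two_ne_zero hc)
    (c ^ 2 + 2 * s) (6 * s + c ^ 2) (4 * (c * s + 3 * d))
  refine (quotient_isBigO.const_mul_left (1 / 2)).congr_left fun n => ?_
  unfold lineLinearCoeff
  rw [← add_assoc]
  field_simp
  ring

theorem neg_lineConstCoeff_half_sub_isBigO (hc : c ≠ 0) (s d : ℝ) :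
    (fun n => -lineConstCoeff c s d n / 2
        - (-n + c / 3) * (n / 2 - c / 12 + 3 * s / (2 * c))) =O[atTop] fun _ : ℝ => (1 : ℝ) := by
  have quotient_isBigO := quadratic_div_affine_sub_isBigO_one (mul_ne_zero two_ne_zero hc)
    (c ^ 2 + 2 * s) (6 * s - c ^ 2) (12 * d) (4 * (3 * d * c - 2 * s ^ 2))
  have const_isBigO :
      (fun _ : ℝ => c / 3 * (-c / 12 + 3 * s / (2 * c))) =O[atTop] fun _ : ℝ => (1 : ℝ) :=
    isBigO_const_const _ one_ne_zero _
  refine ((quotient_isBigO.const_mul_left (-1 / 2)).sub const_isBigO).congr_left fun n => ?_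
  unfold lineConstCoeff
  rw [← add_assoc]
  field_simp
  ring

theorem approxRoots_line (hc : c ≠ 0) (s d : ℝ) :
    ApproxRoots atTop (fun n => lineLinearCoeff c s d n / 2) (fun n => -lineConstCoeff c s d n / 2)
      (fun n => -n + c / 3) (fun n => n / 2 - c / 12 + 3 * s / (2 * c)) (fun n => n⁻¹) := by
  have gap_eq (n : ℝ) : (n / 2 - c / 12 + 3 * s / (2 * c)) - (-n + c / 3)
      = 3 / 2 * n + (3 * s / (2 * c) - 5 * c / 12) := by ring
  have id_isBigO_gap : (fun n : ℝ => n) =O[atTop]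
      fun n => (n / 2 - c / 12 + 3 * s / (2 * c)) - (-n + c / 3) := by
    simpa only [gap_eq] using id_isBigO_affine_atTop (by norm_num) _
  have inv_isLittleO_one : (fun n : ℝ => n⁻¹) =o[atTop] fun _ => (1 : ℝ) :=
    (isLittleO_one_iff ℝ).mpr tendsto_inv_atTop_zero
  refine ⟨?_, ?_, ?_, lineLinearCoeff_half_sub_isBigO hc s d, ?_⟩
  · filter_upwards [eventually_gt_atTop (-(3 * s / (2 * c) - 5 * c / 12) / (3 / 2))] with n hn
    rw [div_lt_iff₀ (by norm_num)] at hn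
    linarith
  · refine IsBigO.trans ?_ id_isBigO_gap
    refine (affine_isBigO_id_atTop (-1 / 2) (c / 4 + 3 * s / (2 * c))).congr_left fun n => ?_
    ring
  · exact (inv_isLittleO_one.trans (isLittleO_const_id_atTop 1)).trans_isBigO id_isBigO_gap
  · refine (neg_lineConstCoeff_half_sub_isBigO hc s d).trans ?_
    refine IsBigO.congr' ((isBigO_refl (fun n : ℝ => n⁻¹) atTop).mul id_isBigO_gap) ?_ .rfl
    filter_upwards [eventually_ne_atTop 0] with n hn
    exact inv_mul_cancel₀ hn

end BogomolovGiesekerLine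

theorem stmt8_general (c s₀ d₀ : ℝ) (hc : c ≠ 0) :
    ∃ N : ℝ, 0 < N ∧ ∃ K : ℝ, 0 < K ∧ ∀ n₀ : ℝ, N ≤ n₀ →
      ∀ A B : ℝ,
        A = -n₀ + (n₀ * (6 * s₀ + c ^ 2) + 4 * (c * s₀ + 3 * d₀))
              / (2 * c * n₀ + c ^ 2 + 2 * s₀) →
        B = n₀ ^ 2 + (n₀ ^ 2 * (6 * s₀ - c ^ 2)
              + 4 * (3 * d₀ * n₀ + 3 * d₀ * c - 2 * s₀ ^ 2))
              / (2 * c * n₀ + c ^ 2 + 2 * s₀) →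
        ∃ b₁ b₂ : ℝ, b₁ < b₂ ∧
          (∀ b : ℝ, 2 * b ^ 2 = A * b + B ↔ b = b₁ ∨ b = b₂) ∧
          |b₁ - (-n₀ + c / 3)| ≤ K / n₀ ∧
          |b₂ - (n₀ / 2 - c / 12 + 3 * s₀ / (2 * c))| ≤ K / n₀ := by
  have roots := approxRoots_line hc s₀ d₀
  obtain ⟨K₁, hK₁, bound₁⟩ := roots.smallerRoot_sub_isBigO.exists_pos
  obtain ⟨K₂, -, bound₂⟩ := roots.largerRoot_sub_isBigO.exists_pos
  obtain ⟨N, hN⟩ := eventually_atTop.mp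
    (roots.eventually_discrim_pos.and (bound₁.bound.and bound₂.bound))
  refine ⟨max N 1, by positivity, max K₁ K₂, by positivity, ?_⟩
  rintro n hn A B rfl rfl
  obtain ⟨discrim_pos, close₁, close₂⟩ := hN n (le_of_max_le_left hn)
  have n_pos : 0 < n := one_pos.trans_le (le_of_max_le_right hn)
  rw [norm_inv, Real.norm_of_nonneg n_pos.le, ← div_eq_mul_inv] at close₁ close₂
  exact ⟨_, _, smallerRoot_lt_largerRoot discrim_pos, two_mul_sq_eq_iff_eq_root discrim_pos.le,
    close₁.trans (by gcongr; exact le_max_left _ _),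
    close₂.trans (by gcongr; exact le_max_right _ _)⟩

theorem stmt8 (c s₀ d₀ : ℝ) (hc : 0 < c) :
    ∃ N : ℝ, 0 < N ∧ ∃ K : ℝ, 0 < K ∧ ∀ n₀ : ℝ, N ≤ n₀ →
      ∀ A B : ℝ,
        A = -n₀ + (n₀ * (6 * s₀ + c ^ 2) + 4 * (c * s₀ + 3 * d₀))
              / (2 * c * n₀ + c ^ 2 + 2 * s₀) →
        B = n₀ ^ 2 + (n₀ ^ 2 * (6 * s₀ - c ^ 2)
              + 4 * (3 * d₀ * n₀ + 3 * d₀ * c - 2 * s₀ ^ 2))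
              / (2 * c * n₀ + c ^ 2 + 2 * s₀) →
        ∃ b₁ b₂ : ℝ, b₁ < b₂ ∧
          (∀ b : ℝ, 2 * b ^ 2 = A * b + B ↔ b = b₁ ∨ b = b₂) ∧
          |b₁ - (-n₀ + c / 3)| ≤ K / n₀ ∧
          |b₂ - (n₀ / 2 - c / 12 + 3 * s₀ / (2 * c))| ≤ K / n₀ :=
  stmt8_general c s₀ d₀ hc.ne'
end
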